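/- Suppose ‖φ‖_{L∞(∂Ω)} ≤ 1. Then there exists a constant C > 0, depending only on Ω, μ, δ₀, κ⁺ and κ⁻ (in particular independent of δ and ε), such that sup_{x ∈ Ω^μ} |∇u_ε(x)| ≤ C ( sup_{x ∈ S} |∇u_ε(x)| + 1 ). -/

import Mathlib

open Set MeasureTheory

/-- Partial derivative in direction `i` of a function on `ℝ²`. -/
noncomputable def pd (i : Fin 2) (f : EuclideanSpace ℝ (Fin 2) → ℝ)
    (x : EuclideanSpace ℝ (Fin 2)) : ℝ :=
  fderiv ℝ f x (EuclideanSpace.single i 1)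

/-- The center `(0, -2-2δ)` of the lower disk `B⁻`. -/
noncomputable def ctr (δ : ℝ) : EuclideanSpace ℝ (Fin 2) :=
  (WithLp.equiv 2 (Fin 2 → ℝ)).symm ![0, -2 - 2 * δ]

/-- The upper unit disk `B⁺`, centered at the origin. -/
noncomputable def Bp : Set (EuclideanSpace ℝ (Fin 2)) := Metric.ball 0 1

/-- The lower unit disk `B⁻`, centered at `(0, -2-2δ)`. -/
noncomputable def Bm (δ : ℝ) : Set (EuclideanSpace ℝ (Fin 2)) := Metric.ball (ctr δ) 1

open Classical in
/-- The conductivity: `κ⁺` on `B⁺`, `κ⁻` on `B⁻`, and `1` elsewhere. -/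
noncomputable def aFun (δ κp κm : ℝ) (x : EuclideanSpace ℝ (Fin 2)) : ℝ :=
  if x ∈ Bp then κp else if x ∈ Bm δ then κm else 1

/-- `Ω^σ = {x ∈ Ω : dist(x, ∂Ω) ≥ σ}`. -/
noncomputable def innerReg (Ω : Set (EuclideanSpace ℝ (Fin 2))) (σ : ℝ) :
    Set (EuclideanSpace ℝ (Fin 2)) :=
  {x ∈ Ω | σ ≤ Metric.infDist x (frontier Ω)}

/-- `Ω` has smooth boundary: it is the sublevel set of a smooth function with
nonvanishing gradient on the boundary. -/
def SmoothBoundary (Ω : Set (EuclideanSpace ℝ (Fin 2))) : Prop :=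
  ∃ f : EuclideanSpace ℝ (Fin 2) → ℝ, ContDiff ℝ (⊤ : ℕ∞) f ∧ Ω = {x | f x < 0} ∧
    ∀ x ∈ frontier Ω, fderiv ℝ f x ≠ 0

/-- `‖φ‖_{L^∞(∂Ω)}`. -/
noncomputable def bdryNorm (Ω : Set (EuclideanSpace ℝ (Fin 2))) (φ : EuclideanSpace ℝ (Fin 2) → ℝ) : ℝ :=
  sSup ((fun y => |φ y|) '' frontier Ω)

/-- `W⁺ = {x ∈ Ω : dist(x, ∂B⁺) ≤ μ, x₂ ≥ -1-δ}`. -/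
noncomputable def Wp (Ω : Set (EuclideanSpace ℝ (Fin 2))) (δ μ : ℝ) :
    Set (EuclideanSpace ℝ (Fin 2)) :=
  {x ∈ Ω | Metric.infDist x (Metric.sphere (0 : EuclideanSpace ℝ (Fin 2)) 1) ≤ μ
    ∧ -1 - δ ≤ x 1}

/-- `W⁻ = {x ∈ Ω : dist(x, ∂B⁻) ≤ μ, x₂ ≤ -1-δ}`. -/
noncomputable def Wm (Ω : Set (EuclideanSpace ℝ (Fin 2))) (δ μ : ℝ) :
    Set (EuclideanSpace ℝ (Fin 2)) :=
  {x ∈ Ω | Metric.infDist x (Metric.sphere (ctr δ) 1) ≤ μ ∧ x 1 ≤ -1 - δ}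

/-- The horizontal segment `S = {(x₁, -1-δ) : -c ≤ x₁ ≤ c}`. -/
def Sseg (c δ : ℝ) : Set (EuclideanSpace ℝ (Fin 2)) :=
  {x | |x 0| ≤ c ∧ x 1 = -1 - δ}

/-- The thin rectangle `E = {(x₁,x₂) : -c ≤ x₁ ≤ c, |x₂+1+δ| ≤ δ/2}`. -/
def Eset (c δ : ℝ) : Set (EuclideanSpace ℝ (Fin 2)) :=
  {x | |x 0| ≤ c ∧ |x 1 + 1 + δ| ≤ δ / 2}

abbrev E2 := EuclideanSpace ℝ (Fin 2)

/-- Coordinate unit vector. -/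
noncomputable def eb (i : Fin 2) : E2 := EuclideanSpace.single i 1

lemma second_test (f : ℝ → ℝ) (g : ℝ → ℝ) (Q : ℝ) (hmax : IsLocalMax f 0)
    (hf : ∀ᶠ t in nhds (0:ℝ), HasDerivAt f (g t) t) (hg : HasDerivAt g Q 0) :
    g 0 = 0 ∧ Q ≤ 0 := by
  have h0 : HasDerivAt f (g 0) 0 := hf.self_of_nhds
  have hg0 : g 0 = 0 := hmax.hasDerivAt_eq_zero h0
  refine ⟨hg0, ?_⟩
  by_contra hQ
  push Not at hQ
  have hde : deriv f =ᶠ[nhds 0] g := hf.mono fun t ht => ht.deriv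
  have hdd : deriv (deriv f) 0 = Q := by rw [hde.deriv_eq]; exact hg.deriv
  have hmin : IsLocalMin f 0 := isLocalMin_of_deriv_deriv_pos (by rw [hdd]; exact hQ)
    (by rw [h0.deriv, hg0]) h0.continuousAt
  have hc : f =ᶠ[nhds 0] fun _ => f 0 := by
    filter_upwards [hmax, hmin] with t h1 h2
    exact le_antisymm h1 h2
  have h3 : deriv f =ᶠ[nhds 0] fun _ => 0 := by
    have := hc.deriv
    simpa using this
  have h4 : deriv (deriv f) 0 = 0 := by rw [h3.deriv_eq]; simp
  linarith

lemma line_tendsto (x v : E2) : Filter.Tendsto (fun t : ℝ => x + t • v) (nhds 0) (nhds x) := by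
  have : Continuous (fun t : ℝ => x + t • v) := by fun_prop
  have h := this.tendsto 0
  simpa using h

lemma line_shift {f : E2 → ℝ} {d : ℝ} {x v : E2} {t : ℝ}
    (h : HasLineDerivAt ℝ f d (x + t • v) v) : HasDerivAt (fun s : ℝ => f (x + s • v)) d t := by
  unfold HasLineDerivAt at h
  have h2 : HasDerivAt (fun s : ℝ => s - t) 1 t := (hasDerivAt_id t).sub_const t
  have h3 : HasDerivAt (fun s : ℝ => f (x + t • v + s • v)) d (t - t) := by simpa using h
  have := HasDerivAt.comp (h := fun s : ℝ => s - t) t h3 h2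
  simp only [mul_one] at this
  refine this.congr_of_eventuallyEq (Filter.Eventually.of_forall fun s => ?_)
  simp only [Function.comp]
  congr 1
  module

lemma ld_test {U : Set E2} (hU : IsOpen U) {x : E2} (hx : x ∈ U) (v : E2) (f p q : E2 → ℝ)
    (hmax : IsLocalMax f x) (hp : ∀ y ∈ U, HasLineDerivAt ℝ f (p y) y v)
    (hq : HasLineDerivAt ℝ p (q x) x v) : p x = 0 ∧ q x ≤ 0 := by
  have ht := line_tendsto x v
  have := second_test (fun t : ℝ => f (x + t • v)) (fun t : ℝ => p (x + t • v)) (q x) (by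
      have : ∀ᶠ t in nhds (0:ℝ), f (x + t • v) ≤ f x := ht.eventually hmax
      simpa [IsLocalMax, IsMaxFilter] using this)
    (by
      filter_upwards [ht.eventually (hU.mem_nhds hx)] with t htU
      exact line_shift (hp _ htU)) hq
  simpa using this

lemma ld_coord (i j : Fin 2) (x : E2) :
    HasLineDerivAt ℝ (fun y : E2 => y i) (if i = j then 1 else 0) x (eb j) := by
  unfold HasLineDerivAt eb
  have : (fun t : ℝ => (x + t • EuclideanSpace.single j (1:ℝ)) i)
      = fun t : ℝ => x i + t * (if i = j then 1 else 0) := by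
    funext t
    simp
  simp only [this]
  simpa using ((hasDerivAt_id (0:ℝ)).mul_const (if i = j then (1:ℝ) else 0)).const_add (x i)

lemma ld_add {f g : E2 → ℝ} {a b : ℝ} {x v : E2} (hf : HasLineDerivAt ℝ f a x v)
    (hg : HasLineDerivAt ℝ g b x v) : HasLineDerivAt ℝ (fun y => f y + g y) (a + b) x v :=
  HasDerivAt.add hf hg

lemma ld_sub {f g : E2 → ℝ} {a b : ℝ} {x v : E2} (hf : HasLineDerivAt ℝ f a x v)
    (hg : HasLineDerivAt ℝ g b x v) : HasLineDerivAt ℝ (fun y => f y - g y) (a - b) x v :=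
  HasDerivAt.sub hf hg

lemma ld_mul {f g : E2 → ℝ} {a b : ℝ} {x v : E2} (hf : HasLineDerivAt ℝ f a x v)
    (hg : HasLineDerivAt ℝ g b x v) :
    HasLineDerivAt ℝ (fun y => f y * g y) (a * g x + f x * b) x v := by
  have := HasDerivAt.mul hf hg
  simp only [zero_smul, add_zero] at this
  exact this

lemma ld_const (c : ℝ) (x v : E2) : HasLineDerivAt ℝ (fun _ : E2 => c) 0 x v :=
  hasDerivAt_const _ _

lemma ld_exp {f : E2 → ℝ} {a : ℝ} {x v : E2} (hf : HasLineDerivAt ℝ f a x v) :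
    HasLineDerivAt ℝ (fun y => Real.exp (f y)) (Real.exp (f x) * a) x v := by
  have := HasDerivAt.exp hf
  simp only [zero_smul, add_zero] at this
  exact this

lemma ld_neg {f : E2 → ℝ} {a : ℝ} {x v : E2} (hf : HasLineDerivAt ℝ f a x v) :
    HasLineDerivAt ℝ (fun y => - f y) (-a) x v :=
  HasDerivAt.neg hf

/-- Weak maximum principle. -/
theorem max_principle {K U : Set E2} (hK : IsCompact K) (hU : IsOpen U) (hUK : U ⊆ K)
    {u : E2 → ℝ} (hu : ContinuousOn u K) {a b0 b1 : E2 → ℝ} {Λ : ℝ}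
    (ha : ∀ x ∈ U, 0 < a x) (hb : ∀ x ∈ U, |b0 x| ≤ Λ * a x)
    {p0 p1 q0 q1 : E2 → ℝ}
    (hp0 : ∀ x ∈ U, HasLineDerivAt ℝ u (p0 x) x (eb 0))
    (hp1 : ∀ x ∈ U, HasLineDerivAt ℝ u (p1 x) x (eb 1))
    (hq0 : ∀ x ∈ U, HasLineDerivAt ℝ p0 (q0 x) x (eb 0))
    (hq1 : ∀ x ∈ U, HasLineDerivAt ℝ p1 (q1 x) x (eb 1))
    (heq : ∀ x ∈ U, 0 ≤ a x * (q0 x + q1 x) + (b0 x * p0 x + b1 x * p1 x))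
    {B : ℝ} (hB : ∀ x ∈ K \ U, u x ≤ B) : ∀ x ∈ K, u x ≤ B := by
  intro x hx
  by_contra hlt
  push Not at hlt
  set l : ℝ := |Λ| + 1 with hl
  have hl0 : 0 < l := by positivity
  set ψ : E2 → ℝ := fun y => Real.exp (l * y 0) with hψ
  have hψc : Continuous ψ := by simp only [hψ]; fun_prop
  obtain ⟨P, hP⟩ := (hK.image hψc).bddAbove
  have hP' : ∀ y ∈ K, ψ y ≤ P := fun y hy => hP (mem_image_of_mem _ hy)
  have hψ0 : ∀ y, 0 < ψ y := fun y => Real.exp_pos _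
  have hP0 : 0 < P := lt_of_lt_of_le (hψ0 x) (hP' x hx)
  set η : ℝ := (u x - B) / (2 * P) with hη
  have hη0 : 0 < η := by rw [hη]; apply div_pos <;> linarith
  have hηP : η * P = (u x - B) / 2 := by rw [hη]; field_simp
  set v : E2 → ℝ := fun y => u y + η * ψ y with hv
  have hvc : ContinuousOn v K := hu.add (hψc.continuousOn.const_smul η)
  obtain ⟨z, hzK, hz⟩ := hK.exists_isMaxOn ⟨x, hx⟩ hvc
  have hzx : v x ≤ v z := hz hx
  by_cases hzU : z ∈ U
  · have hloc : IsLocalMax v z := by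
      filter_upwards [hU.mem_nhds hzU] with y hy
      exact hz (hUK hy)
    have hψ1 : ∀ (y : E2), HasLineDerivAt ℝ ψ (ψ y * l) y (eb 0) := by
      intro y
      have := ld_exp (ld_mul (ld_const l y (eb 0)) (ld_coord 0 0 y))
      simpa using this
    have hψ2 : ∀ (y : E2), HasLineDerivAt ℝ ψ 0 y (eb 1) := by
      intro y
      have := ld_exp (ld_mul (ld_const l y (eb 1)) (ld_coord 0 1 y))
      simpa using this
    have t0 := ld_test hU hzU (eb 0) v (fun y => p0 y + η * (ψ y * l))
      (fun y => q0 y + η * (ψ y * l * l)) hloc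
      (fun y hy => by
        have := ld_add (hp0 y hy) (ld_mul (ld_const η y (eb 0)) (hψ1 y))
        simpa using this)
      (by
        have := ld_add (hq0 z hzU) (ld_mul (ld_const η z (eb 0))
          (ld_mul (hψ1 z) (ld_const l z (eb 0))))
        simpa using this)
    have t1 := ld_test hU hzU (eb 1) v p1 q1 hloc
      (fun y hy => by
        have := ld_add (hp1 y hy) (ld_mul (ld_const η y (eb 1)) (hψ2 y))
        simpa using this) (hq1 z hzU)
    obtain ⟨h1, h2⟩ := t0
    obtain ⟨h3, h4⟩ := t1
    have h5 := heq z hzU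
    have haz := ha z hzU
    have hbz := hb z hzU
    have e1 : p0 z = -(η * (ψ z * l)) := by linarith
    have hpos : 0 < η * ψ z * l := by have := hψ0 z; positivity
    have h6 : a z * (q0 z + q1 z) ≤ a z * (-(η * (ψ z * l * l))) :=
      mul_le_mul_of_nonneg_left (by linarith) haz.le
    have h7 : -b0 z < a z * l := by
      have : -b0 z ≤ |b0 z| := neg_le_abs _
      have : Λ ≤ |Λ| := le_abs_self _
      nlinarith
    rw [e1, h3] at h5
    nlinarith [mul_pos hpos (sub_pos.2 h7)]
  · have h1 := hB z ⟨hzK, hzU⟩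
    have h2 := hP' z hzK
    have h3 : u x ≤ v x := by simp only [hv]; have := mul_pos hη0 (hψ0 x); linarith
    have h4 : v z ≤ B + η * P := by
      simp only [hv]
      have := mul_le_mul_of_nonneg_left h2 hη0.le
      linarith
    linarith

lemma pd_smooth {Ω : Set E2} (hΩ : IsOpen Ω) {f : E2 → ℝ} (hf : ContDiffOn ℝ (⊤ : ℕ∞) f Ω)
    (i : Fin 2) : ContDiffOn ℝ (⊤ : ℕ∞) (pd i f) Ω := by
  have h : ContDiffOn ℝ (⊤ : ℕ∞) (fderiv ℝ f) Ω := hf.fderiv_of_isOpen hΩ (by norm_cast)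
  exact h.clm_apply contDiffOn_const

lemma smooth_diff {Ω : Set E2} (hΩ : IsOpen Ω) {f : E2 → ℝ} (hf : ContDiffOn ℝ (⊤ : ℕ∞) f Ω)
    {x : E2} (hx : x ∈ Ω) : DifferentiableAt ℝ f x :=
  (hf.contDiffAt (hΩ.mem_nhds hx)).differentiableAt (by simp)

lemma ld_pd {Ω : Set E2} (hΩ : IsOpen Ω) {f : E2 → ℝ} (hf : ContDiffOn ℝ (⊤ : ℕ∞) f Ω)
    (i : Fin 2) {x : E2} (hx : x ∈ Ω) : HasLineDerivAt ℝ f (pd i f x) x (eb i) :=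
  (smooth_diff hΩ hf hx).hasFDerivAt.hasLineDerivAt _

lemma pd_pd {Ω : Set E2} (hΩ : IsOpen Ω) {f : E2 → ℝ} (hf : ContDiffOn ℝ (⊤ : ℕ∞) f Ω)
    (i j : Fin 2) {x : E2} (hx : x ∈ Ω) :
    pd i (pd j f) x = fderiv ℝ (fderiv ℝ f) x (eb i) (eb j) := by
  have h : ContDiffOn ℝ (⊤ : ℕ∞) (fderiv ℝ f) Ω := hf.fderiv_of_isOpen hΩ (by norm_cast)
  have hd : DifferentiableAt ℝ (fderiv ℝ f) x :=
    (h.contDiffAt (hΩ.mem_nhds hx)).differentiableAt (by simp)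
  have := hd.hasFDerivAt.clm_apply (hasFDerivAt_const (eb j) x)
  have e : pd j f = fun y => fderiv ℝ f y (eb j) := rfl
  rw [e, pd, this.fderiv]
  simp [eb]

lemma pd_comm {Ω : Set E2} (hΩ : IsOpen Ω) {f : E2 → ℝ} (hf : ContDiffOn ℝ (⊤ : ℕ∞) f Ω)
    (i j : Fin 2) {x : E2} (hx : x ∈ Ω) : pd i (pd j f) x = pd j (pd i f) x := by
  rw [pd_pd hΩ hf i j hx, pd_pd hΩ hf j i hx]
  have : IsSymmSndFDerivAt ℝ f x := (hf.contDiffAt (hΩ.mem_nhds hx)).isSymmSndFDerivAt (by simp; exact WithTop.coe_le_coe.2 le_top)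
  exact this _ _

lemma pd_le (i : Fin 2) (f : E2 → ℝ) (x : E2) : |pd i f x| ≤ ‖fderiv ℝ f x‖ := by
  have := (fderiv ℝ f x).le_opNorm (EuclideanSpace.single i (1:ℝ))
  simpa [pd] using this

lemma norm_le_pd (f : E2 → ℝ) (x : E2) : ‖fderiv ℝ f x‖ ≤ |pd 0 f x| + |pd 1 f x| := by
  refine ContinuousLinearMap.opNorm_le_bound _ (by positivity) fun v => ?_
  have hv : v = v 0 • EuclideanSpace.single 0 (1:ℝ) + v 1 • EuclideanSpace.single 1 (1:ℝ) := by
    ext i; fin_cases i <;> simp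
  have h0 : |v 0| ≤ ‖v‖ := by simpa using PiLp.norm_apply_le v 0
  have h1 : |v 1| ≤ ‖v‖ := by simpa using PiLp.norm_apply_le v 1
  have e : fderiv ℝ f x v = v 0 * pd 0 f x + v 1 * pd 1 f x := by
    conv_lhs => rw [hv]
    simp [pd]
  rw [e, Real.norm_eq_abs]
  calc _ ≤ |v 0 * pd 0 f x| + |v 1 * pd 1 f x| := abs_add_le _ _
    _ = |v 0| * |pd 0 f x| + |v 1| * |pd 1 f x| := by rw [abs_mul, abs_mul]
    _ ≤ ‖v‖ * |pd 0 f x| + ‖v‖ * |pd 1 f x| := by gcongr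
    _ = _ := by ring

lemma deriv_nonpos {h : ℝ → ℝ} {d R : ℝ} (hR : 0 < R) (hd : HasDerivAt h d 0)
    (hle : ∀ t, 0 < t → t < R → h t ≤ h 0) : d ≤ 0 := by
  have := hd.tendsto_slope_zero_right
  refine le_of_tendsto this ?_
  filter_upwards [Ioo_mem_nhdsGT hR] with t ht
  simp only [zero_add, smul_eq_mul]
  have := hle t ht.1 ht.2
  have h2 : 0 < t⁻¹ := inv_pos.2 ht.1
  nlinarith

lemma dist_sq2 (x y : E2) : dist x y ^ 2 = (x 0 - y 0) ^ 2 + (x 1 - y 1) ^ 2 := by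
  rw [EuclideanSpace.dist_eq, Real.sq_sqrt (by positivity)]
  simp [Real.dist_eq, sq_abs]

/-- Sign flip in coordinate `i`. -/
noncomputable def sg (i k : Fin 2) : ℝ := if k = i then -1 else 1

/-- Reflection in coordinate `i` through `c`. -/
noncomputable def rfl2 (i : Fin 2) (c x : E2) : E2 := x - (2 * (x i - c i)) • eb i

lemma rfl2_apply (i k : Fin 2) (c x : E2) : rfl2 i c x k - c k = sg i k * (x k - c k) := by
  unfold rfl2 sg eb
  by_cases h : k = i
  · subst h; simp; ring
  · simp [h]

lemma rfl2_line (i k : Fin 2) (c x : E2) (t : ℝ) :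
    rfl2 i c (x + t • eb k) = rfl2 i c x + t • (sg i k • eb k) := by
  unfold rfl2 sg eb
  ext l
  fin_cases i <;> fin_cases k <;> fin_cases l <;> simp <;> ring

lemma rfl2_dist (i : Fin 2) (c x : E2) : dist (rfl2 i c x) c = dist x c := by
  have : dist (rfl2 i c x) c ^ 2 = dist x c ^ 2 := by
    rw [dist_sq2, dist_sq2, rfl2_apply, rfl2_apply]
    unfold sg
    fin_cases i <;> simp <;> ring
  exact (pow_left_inj₀ dist_nonneg dist_nonneg two_ne_zero).1 this

lemma ld_rfl {f : E2 → ℝ} {d : ℝ} {i k : Fin 2} {c x : E2}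
    (h : HasLineDerivAt ℝ f d (rfl2 i c x) (eb k)) :
    HasLineDerivAt ℝ (fun y => f (rfl2 i c y)) (sg i k * d) x (eb k) := by
  have := h.smul (sg i k)
  unfold HasLineDerivAt at this ⊢
  simp only [rfl2_line]
  simpa using this

lemma harm_grad_le {c : E2} {R : ℝ} (hR : 0 < R) {u : E2 → ℝ} {P Q : Fin 2 → E2 → ℝ}
    (hu : ContinuousOn u (Metric.closedBall c R))
    (hP : ∀ k, ∀ x ∈ Metric.closedBall c R, HasLineDerivAt ℝ u (P k x) x (eb k))
    (hQ : ∀ k, ∀ x ∈ Metric.closedBall c R, HasLineDerivAt ℝ (P k) (Q k x) x (eb k))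
    (hL : ∀ x ∈ Metric.closedBall c R, Q 0 x + Q 1 x = 0)
    (h1 : ∀ x ∈ Metric.closedBall c R, |u x| ≤ 1) (i : Fin 2) : P i c ≤ 2 / R := by
  set K : Set E2 := Metric.closedBall c R ∩ {x | c i ≤ x i} with hKd
  set U : Set E2 := Metric.ball c R ∩ {x | c i < x i} with hUd
  have hK : IsCompact K := (isCompact_closedBall c R).inter_right
    (isClosed_le continuous_const (by fun_prop))
  have hU : IsOpen U := Metric.isOpen_ball.inter (isOpen_lt continuous_const (by fun_prop))
  have hUB : ∀ x ∈ U, x ∈ Metric.closedBall c R := fun x hx => Metric.ball_subset_closedBall hx.1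
  have hUK : U ⊆ K := fun x hx => ⟨hUB x hx, show c i ≤ x i from le_of_lt hx.2⟩
  have hrB : ∀ x ∈ Metric.closedBall c R, rfl2 i c x ∈ Metric.closedBall c R := by
    intro x hx
    rw [Metric.mem_closedBall, rfl2_dist]; exact hx
  set ψ : E2 → ℝ := fun x => (2 / R ^ 2) * (sg i 0 * ((x 0 - c 0) * (x 0 - c 0))
      + sg i 1 * ((x 1 - c 1) * (x 1 - c 1))) + (4 / R) * (x i - c i) with hψ
  set ψ1 : Fin 2 → E2 → ℝ := fun k x => (2 / R ^ 2) * (sg i k * (2 * (x k - c k)))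
    + (4 / R) * (if i = k then 1 else 0) with hψ1
  have hc : ∀ (l k : Fin 2) (x : E2), HasLineDerivAt ℝ (fun y : E2 => y l - c l)
      (if l = k then 1 else 0) x (eb k) := by
    intro l k x
    have := ld_sub (ld_coord l k x) (ld_const (c l) x (eb k))
    simpa using this
  have dψ : ∀ k x, HasLineDerivAt ℝ ψ (ψ1 k x) x (eb k) := by
    intro k x
    have := ld_add (ld_mul (ld_const (2 / R ^ 2) x (eb k))
      (ld_add (ld_mul (ld_const (sg i 0) x (eb k)) (ld_mul (hc 0 k x) (hc 0 k x)))
        (ld_mul (ld_const (sg i 1) x (eb k)) (ld_mul (hc 1 k x) (hc 1 k x)))))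
      (ld_mul (ld_const (4 / R) x (eb k)) (hc i k x))
    convert this using 1
    simp only [hψ1]
    fin_cases k <;> simp <;> left <;> left <;> ring
  have dψ1 : ∀ k x, HasLineDerivAt ℝ (ψ1 k) ((4 / R ^ 2) * sg i k) x (eb k) := by
    intro k x
    have := ld_add (ld_mul (ld_const (2 / R ^ 2) x (eb k))
      (ld_mul (ld_const (sg i k) x (eb k)) (ld_mul (ld_const 2 x (eb k)) (hc k k x))))
      (ld_const ((4 / R) * (if i = k then 1 else 0)) x (eb k))
    convert this using 1
    simp; ring
  have hss : ∀ k, sg i k * sg i k = 1 := by intro k; unfold sg; split_ifs <;> norm_num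
  have hs2 : sg i 0 + sg i 1 = 0 := by unfold sg; fin_cases i <;> simp
  set w : E2 → ℝ := fun x => u x - u (rfl2 i c x) - ψ x with hw
  have hwp : ∀ k, ∀ x ∈ U, HasLineDerivAt ℝ w (P k x - sg i k * P k (rfl2 i c x) - ψ1 k x) x (eb k) :=
    fun k x hx => ld_sub (ld_sub (hP k x (hUB x hx)) (ld_rfl (hP k _ (hrB x (hUB x hx))))) (dψ k x)
  have hwq : ∀ k, ∀ x ∈ U, HasLineDerivAt ℝ
      (fun x => P k x - sg i k * P k (rfl2 i c x) - ψ1 k x)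
      (Q k x - Q k (rfl2 i c x) - (4 / R ^ 2) * sg i k) x (eb k) := by
    intro k x hx
    have := ld_sub (ld_sub (hQ k x (hUB x hx)) (ld_mul (ld_const (sg i k) x (eb k))
      (ld_rfl (hQ k _ (hrB x (hUB x hx)))))) (dψ1 k x)
    convert this using 1
    rw [← mul_assoc, hss]; ring
  have hrc : Continuous (rfl2 i c) := by
    unfold rfl2; fun_prop
  have hwc : ContinuousOn w K := by
    refine ContinuousOn.sub (ContinuousOn.sub (hu.mono inter_subset_left) ?_) ?_
    · exact hu.comp hrc.continuousOn (fun x hx => hrB x hx.1)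
    · apply Continuous.continuousOn; simp only [hψ]; fun_prop
  have hmp := max_principle hK hU hUK hwc (a := fun _ => 1) (b0 := fun _ => 0) (b1 := fun _ => 0)
    (Λ := 0) (by simp) (by simp) (hwp 0) (hwp 1) (hwq 0) (hwq 1) (by
      intro x hx
      have e1 := hL x (hUB x hx)
      have e2 := hL _ (hrB x (hUB x hx))
      have : (4 / R ^ 2) * (sg i 0 + sg i 1) = 0 := by rw [hs2]; simp
      simp only [zero_mul, one_mul, add_zero]
      linarith) (B := 0) (by
      rintro x ⟨⟨hxB, hxi⟩, hxU⟩
      have hxi' : c i ≤ x i := hxi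
      by_cases hxi2 : x i = c i
      · have : rfl2 i c x = x := by unfold rfl2; simp [hxi2]
        simp only [hw, this, hψ, hxi2]
        have : 0 ≤ (2 / R ^ 2) * (sg i 0 * ((x 0 - c 0) * (x 0 - c 0))
            + sg i 1 * ((x 1 - c 1) * (x 1 - c 1))) := by
          apply mul_nonneg (by positivity)
          unfold sg
          fin_cases i
          · simp at hxi2; simp [hxi2]; exact mul_self_nonneg _
          · simp at hxi2; simp [hxi2]; exact mul_self_nonneg _
        linarith
      · have hlt : c i < x i := lt_of_le_of_ne hxi' (Ne.symm hxi2)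
        have hd : dist x c = R := by
          by_contra hne
          exact hxU ⟨lt_of_le_of_ne hxB hne, hlt⟩
        have hd2 := dist_sq2 x c
        rw [hd] at hd2
        have hb := abs_le.1 (h1 x hxB)
        have hb2 := abs_le.1 (h1 _ (hrB x hxB))
        have key : 2 ≤ ψ x := by
          have hle : x i - c i ≤ R := by
            have : (x i - c i) ^ 2 ≤ R ^ 2 := by
              rw [hd2]; fin_cases i <;> simp <;> positivity
            exact (abs_le_of_sq_le_sq' this hR.le).2
          have e : ψ x = 2 + (4 / R ^ 2) * ((x i - c i) * (R - (x i - c i))) := by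
            have e0 : sg i 0 * ((x 0 - c 0) * (x 0 - c 0)) + sg i 1 * ((x 1 - c 1) * (x 1 - c 1))
              = R ^ 2 - 2 * (x i - c i) ^ 2 := by
              rw [hd2]; unfold sg; fin_cases i <;> simp <;> ring
            simp only [hψ]
            rw [e0]
            field_simp
            ring
          rw [e]
          have : 0 ≤ (4 / R ^ 2) * ((x i - c i) * (R - (x i - c i))) :=
            mul_nonneg (by positivity) (mul_nonneg (by linarith) (by linarith))
          linarith
        simp only [hw]
        linarith)
  have hcB : c ∈ Metric.closedBall c R := Metric.mem_closedBall_self hR.le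
  have hrcc : rfl2 i c c = c := by unfold rfl2; simp
  have hder : HasLineDerivAt ℝ w (P i c - sg i i * P i (rfl2 i c c) - ψ1 i c) c (eb i) :=
    ld_sub (ld_sub (hP i c hcB) (ld_rfl (hP i _ (hrB c hcB)))) (dψ i c)
  have hfin := deriv_nonpos hR hder (by
    intro t ht htR
    have h0 : w (c + (0:ℝ) • eb i) = 0 := by simp [hw, hrcc, hψ]
    rw [h0]
    apply hmp
    constructor
    · simp [eb, norm_smul, abs_of_pos ht, htR.le]
    · simp [eb, ht.le])
  rw [hrcc] at hfin
  have e1 : sg i i = -1 := by simp [sg]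
  have e2 : ψ1 i c = 4 / R := by simp [hψ1]
  rw [e1, e2] at hfin
  have : 4 / R = 2 * (2 / R) := by ring
  linarith

lemma harm_grad {Ω : Set E2} (hΩ : IsOpen Ω) {u : E2 → ℝ} (hu : ContDiffOn ℝ (⊤ : ℕ∞) u Ω)
    {c : E2} {R : ℝ} (hR : 0 < R) (hB : Metric.closedBall c R ⊆ Ω)
    (hL : ∀ x ∈ Metric.closedBall c R, pd 0 (pd 0 u) x + pd 1 (pd 1 u) x = 0)
    (h1 : ∀ x ∈ Metric.closedBall c R, |u x| ≤ 1) : ‖fderiv ℝ u c‖ ≤ 4 / R := by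
  have hd : ∀ k, ∀ x ∈ Metric.closedBall c R, HasLineDerivAt ℝ u (pd k u x) x (eb k) :=
    fun k x hx => ld_pd hΩ hu k (hB hx)
  have hd2 : ∀ k, ∀ x ∈ Metric.closedBall c R,
      HasLineDerivAt ℝ (pd k u) (pd k (pd k u) x) x (eb k) :=
    fun k x hx => ld_pd hΩ (pd_smooth hΩ hu k) k (hB hx)
  have hc := hu.continuousOn.mono hB
  have key : ∀ i, |pd i u c| ≤ 2 / R := by
    intro i
    rw [abs_le]
    constructor
    · have := harm_grad_le hR (u := fun x => - u x) (P := fun k x => - pd k u x)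
        (Q := fun k x => - pd k (pd k u) x) hc.neg (fun k x hx => ld_neg (hd k x hx))
        (fun k x hx => ld_neg (hd2 k x hx)) (fun x hx => by have := hL x hx; linarith)
        (fun x hx => by rw [abs_neg]; exact h1 x hx) i
      linarith
    · exact harm_grad_le hR (u := u) (P := fun k x => pd k u x)
        (Q := fun k x => pd k (pd k u) x) hc hd hd2 hL h1 i
  have := norm_le_pd u c
  have e : 4 / R = 2 / R + 2 / R := by ring
  have := key 0
  have := key 1
  linarith

lemma ld_zero {U : Set E2} (hU : IsOpen U) {f : E2 → ℝ} (hf : ∀ y ∈ U, f y = 0) {x v : E2}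
    (hx : x ∈ U) {d : ℝ} (hd : HasLineDerivAt ℝ f d x v) : d = 0 := by
  have h0 : (fun t : ℝ => f (x + t • v)) =ᶠ[nhds 0] fun _ => 0 := by
    filter_upwards [(line_tendsto x v).eventually (hU.mem_nhds hx)] with t ht
    exact hf _ ht
  have h1 : HasDerivAt (fun t : ℝ => f (x + t • v)) 0 0 :=
    (hasDerivAt_const (0:ℝ) (0:ℝ)).congr_of_eventuallyEq h0
  exact HasDerivAt.unique hd h1

lemma pd_congr {U : Set E2} (hU : IsOpen U) {f g : E2 → ℝ} (h : ∀ y ∈ U, f y = g y) {x : E2}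
    (hx : x ∈ U) (i : Fin 2) : pd i f x = pd i g x := by
  have : f =ᶠ[nhds x] g := by
    filter_upwards [hU.mem_nhds hx] with y hy using h y hy
  unfold pd
  rw [this.fderiv_eq]

lemma radial_zero {U : Set E2} (hU : IsOpen U) {a : E2 → ℝ} {c : E2} {G : ℝ → ℝ}
    (hG : ∀ x ∈ U, a x = G (dist x c)) {x : E2} (hx : x ∈ U) (ha : DifferentiableAt ℝ a x) :
    (x 0 - c 0) * pd 1 a x - (x 1 - c 1) * pd 0 a x = 0 := by
  set J : E2 := (-(x 1 - c 1)) • EuclideanSpace.single 0 (1:ℝ)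
    + (x 0 - c 0) • EuclideanSpace.single 1 (1:ℝ) with hJ
  set γ : ℝ → E2 := fun t => c + (Real.cos t • (x - c) + Real.sin t • J) with hγ
  have hγ0 : γ 0 = x := by simp [hγ]
  have hγd : HasDerivAt γ J 0 := by
    have h1 := ((Real.hasDerivAt_cos 0).smul_const (x - c)).add
      ((Real.hasDerivAt_sin 0).smul_const J)
    have h2 := h1.const_add c
    exact HasDerivAt.congr_deriv h2 (by simp)
  have hdist : ∀ t, dist (γ t) c = dist x c := by
    intro t
    have : dist (γ t) c ^ 2 = dist x c ^ 2 := by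
      rw [dist_sq2, dist_sq2]
      simp only [hγ, hJ]
      simp
      have := Real.sin_sq_add_cos_sq t
      linear_combination ((x 0 - c 0) ^ 2 + (x 1 - c 1) ^ 2) * this
    exact (pow_left_inj₀ dist_nonneg dist_nonneg two_ne_zero).1 this
  have hcomp : HasDerivAt (a ∘ γ) (fderiv ℝ a x J) 0 := by
    have hf : HasFDerivAt a (fderiv ℝ a x) (γ 0) := by rw [hγ0]; exact ha.hasFDerivAt
    exact hf.comp_hasDerivAt 0 hγd
  have hconst : (a ∘ γ) =ᶠ[nhds 0] fun _ => a x := by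
    have : ∀ᶠ t in nhds (0:ℝ), γ t ∈ U :=
      hγd.continuousAt.eventually_mem (by rw [hγ0]; exact hU.mem_nhds hx)
    filter_upwards [this] with t ht
    simp only [Function.comp]
    rw [hG _ ht, hdist, hG _ hx]
  have hz : fderiv ℝ a x J = 0 :=
    hcomp.unique ((hasDerivAt_const (0:ℝ) (a x)).congr_of_eventuallyEq hconst)
  rw [hJ] at hz
  simp only [map_add, map_smul, smul_eq_mul] at hz
  unfold pd
  linarith

set_option maxHeartbeats 1000000 in
lemma annulus {Ω : Set E2} (hΩ : IsOpen Ω) {u a : E2 → ℝ} (hu : ContDiffOn ℝ (⊤ : ℕ∞) u Ω)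
    (ha : ContDiffOn ℝ (⊤ : ℕ∞) a Ω)
    (hpde : ∀ x ∈ Ω, a x * (pd 0 (pd 0 u) x + pd 1 (pd 1 u) x)
          + (pd 0 a x * pd 0 u x + pd 1 a x * pd 1 u x) = 0)
    {m M ρ0 ρ1 B : ℝ} (hm : 0 < m) (hmM : ∀ x ∈ Ω, m ≤ a x ∧ a x ≤ M)
    {K U : Set E2} (hK : IsCompact K) (hKΩ : K ⊆ Ω) (hU : IsOpen U) (hUK : U ⊆ K) {c : E2}
    (hρ0 : 0 < ρ0) (hρ : ∀ x ∈ K, ρ0 ≤ dist x c ∧ dist x c ≤ ρ1)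
    {G : ℝ → ℝ} (hG : ∀ x ∈ U, a x = G (dist x c))
    (hB : ∀ x ∈ K \ U, ‖fderiv ℝ u x‖ ≤ B) :
    ∀ x ∈ K, ‖fderiv ℝ u x‖ ≤ (4 * ρ1 * (1 + M / m) / ρ0) * B := by
  have hUΩ : ∀ x ∈ U, x ∈ Ω := fun x hx => hKΩ (hUK hx)
  have hai := pd_smooth hΩ ha
  have hui := pd_smooth hΩ hu
  have huij := fun i j => pd_smooth hΩ (hui j) i
  have hd_a := fun k x (hx : x ∈ U) => ld_pd hΩ ha k (hUΩ x hx)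
  have hd_ai := fun i k x (hx : x ∈ U) => ld_pd hΩ (hai i) k (hUΩ x hx)
  have hd_ui := fun i k x (hx : x ∈ U) => ld_pd hΩ (hui i) k (hUΩ x hx)
  have hd_uij := fun i j k x (hx : x ∈ U) => ld_pd hΩ (huij i j) k (hUΩ x hx)
  have hc : ∀ (l k : Fin 2) (x : E2), HasLineDerivAt ℝ (fun y : E2 => y l - c l)
      (if l = k then 1 else 0) x (eb k) := by
    intro l k x
    have := ld_sub (ld_coord l k x) (ld_const (c l) x (eb k))
    simpa using this
  -- symmetry of derivatives
  have s2 : ∀ x ∈ Ω, pd 1 (pd 0 u) x = pd 0 (pd 1 u) x := fun x hx => pd_comm hΩ hu 1 0 hx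
  have s3 : ∀ x ∈ Ω, pd 1 (pd 0 (pd 0 u)) x = pd 0 (pd 0 (pd 1 u)) x := fun x hx => by
    rw [pd_comm hΩ (hui 0) 1 0 hx]
    exact pd_congr hΩ s2 hx 0
  have s3' : ∀ x ∈ Ω, pd 0 (pd 1 (pd 1 u)) x = pd 1 (pd 1 (pd 0 u)) x := fun x hx => by
    rw [pd_comm hΩ (hui 1) 0 1 hx]
    exact (pd_congr hΩ s2 hx 1).symm
  have sa : ∀ x ∈ Ω, pd 1 (pd 0 a) x = pd 0 (pd 1 a) x := fun x hx => pd_comm hΩ ha 1 0 hx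
  -- differentiated equation
  have hF : ∀ k, ∀ x ∈ U, pd k a x * (pd 0 (pd 0 u) x + pd 1 (pd 1 u) x)
      + a x * (pd k (pd 0 (pd 0 u)) x + pd k (pd 1 (pd 1 u)) x)
      + (pd k (pd 0 a) x * pd 0 u x + pd 0 a x * pd k (pd 0 u) x
        + (pd k (pd 1 a) x * pd 1 u x + pd 1 a x * pd k (pd 1 u) x)) = 0 := by
    intro k x hx
    exact ld_zero hU (fun y hy => hpde y (hUΩ y hy)) hx
      (ld_add (ld_mul (hd_a k x hx) (ld_add (hd_uij 0 0 k x hx) (hd_uij 1 1 k x hx)))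
        (ld_add (ld_mul (hd_ai 0 k x hx) (hd_ui 0 k x hx))
          (ld_mul (hd_ai 1 k x hx) (hd_ui 1 k x hx))))
  -- radial relations
  have hR : ∀ x ∈ U, (x 0 - c 0) * pd 1 a x - (x 1 - c 1) * pd 0 a x = 0 :=
    fun x hx => radial_zero hU hG hx (smooth_diff hΩ ha (hUΩ x hx))
  have hRk : ∀ k, ∀ x ∈ U, _ = (0:ℝ) := fun k x hx => ld_zero hU hR hx
      (ld_sub (ld_mul (hc 0 k x) (hd_ai 1 k x hx)) (ld_mul (hc 1 k x) (hd_ai 0 k x hx)))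
  have hR0 : ∀ x ∈ U, pd 1 a x + (x 0 - c 0) * pd 0 (pd 1 a) x
      - (x 1 - c 1) * pd 0 (pd 0 a) x = 0 := by
    intro x hx
    have := hRk 0 x hx
    simpa using this
  have hR1 : ∀ x ∈ U, (x 0 - c 0) * pd 1 (pd 1 a) x
      - (pd 0 a x + (x 1 - c 1) * pd 1 (pd 0 a) x) = 0 := by
    intro x hx
    have := hRk 1 x hx
    simpa using this
  clear hRk
  -- bound for the drift
  obtain ⟨N, hN⟩ := (hK.image_of_continuousOn (((hai 0).continuousOn.mono hKΩ).abs)).bddAbove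
  have hN' : ∀ x ∈ U, |pd 0 a x| ≤ (N / m) * a x := by
    intro x hx
    have h1 : |pd 0 a x| ≤ N := hN (mem_image_of_mem _ (hUK hx))
    have h2 : 0 ≤ N := (abs_nonneg _).trans h1
    have h3 := (hmM x (hUΩ x hx)).1
    calc _ ≤ N := h1
      _ = (N / m) * m := by field_simp
      _ ≤ _ := by gcongr
  have hapos : ∀ x ∈ U, 0 < a x := fun x hx => hm.trans_le (hmM x (hUΩ x hx)).1
  -- the two quantities
  set T : E2 → ℝ := fun x => (x 0 - c 0) * pd 1 u x - (x 1 - c 1) * pd 0 u x with hT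
  set T0 : E2 → ℝ := fun x => pd 1 u x + (x 0 - c 0) * pd 0 (pd 1 u) x
    - (x 1 - c 1) * pd 0 (pd 0 u) x with hT0
  set T1 : E2 → ℝ := fun x => (x 0 - c 0) * pd 1 (pd 1 u) x
    - (pd 0 u x + (x 1 - c 1) * pd 1 (pd 0 u) x) with hT1
  set T00 : E2 → ℝ := fun x => 2 * pd 0 (pd 1 u) x + (x 0 - c 0) * pd 0 (pd 0 (pd 1 u)) x
    - (x 1 - c 1) * pd 0 (pd 0 (pd 0 u)) x with hT00
  set T11 : E2 → ℝ := fun x => (x 0 - c 0) * pd 1 (pd 1 (pd 1 u)) x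
    - (2 * pd 1 (pd 0 u) x + (x 1 - c 1) * pd 1 (pd 1 (pd 0 u)) x) with hT11
  have dT0 : ∀ x ∈ U, HasLineDerivAt ℝ T (T0 x) x (eb 0) := by
    intro x hx
    have := ld_sub (ld_mul (hc 0 0 x) (hd_ui 1 0 x hx)) (ld_mul (hc 1 0 x) (hd_ui 0 0 x hx))
    convert this using 1
    simp [hT0]
  have dT1 : ∀ x ∈ U, HasLineDerivAt ℝ T (T1 x) x (eb 1) := by
    intro x hx
    have := ld_sub (ld_mul (hc 0 1 x) (hd_ui 1 1 x hx)) (ld_mul (hc 1 1 x) (hd_ui 0 1 x hx))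
    convert this using 1
    simp [hT1]
  have dT00 : ∀ x ∈ U, HasLineDerivAt ℝ T0 (T00 x) x (eb 0) := by
    intro x hx
    have := ld_sub (ld_add (hd_ui 1 0 x hx) (ld_mul (hc 0 0 x) (hd_uij 0 1 0 x hx)))
      (ld_mul (hc 1 0 x) (hd_uij 0 0 0 x hx))
    convert this using 1
    simp [hT00]; ring
  have dT11 : ∀ x ∈ U, HasLineDerivAt ℝ T1 (T11 x) x (eb 1) := by
    intro x hx
    have := ld_sub (ld_mul (hc 0 1 x) (hd_uij 1 1 1 x hx))
      (ld_add (hd_ui 0 1 x hx) (ld_mul (hc 1 1 x) (hd_uij 1 0 1 x hx)))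
    convert this using 1
    simp [hT11]; ring
  set S : E2 → ℝ := fun x => (x 0 - c 0) * pd 0 u x + (x 1 - c 1) * pd 1 u x with hS
  set S0 : E2 → ℝ := fun x => pd 0 u x + (x 0 - c 0) * pd 0 (pd 0 u) x
    + (x 1 - c 1) * pd 0 (pd 1 u) x with hS0
  set S1 : E2 → ℝ := fun x => (x 0 - c 0) * pd 1 (pd 0 u) x
    + (pd 1 u x + (x 1 - c 1) * pd 1 (pd 1 u) x) with hS1
  set S00 : E2 → ℝ := fun x => 2 * pd 0 (pd 0 u) x + (x 0 - c 0) * pd 0 (pd 0 (pd 0 u)) x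
    + (x 1 - c 1) * pd 0 (pd 0 (pd 1 u)) x with hS00
  set S11 : E2 → ℝ := fun x => (x 0 - c 0) * pd 1 (pd 1 (pd 0 u)) x
    + (2 * pd 1 (pd 1 u) x + (x 1 - c 1) * pd 1 (pd 1 (pd 1 u)) x) with hS11
  have dS0 : ∀ x ∈ U, HasLineDerivAt ℝ S (S0 x) x (eb 0) := by
    intro x hx
    have := ld_add (ld_mul (hc 0 0 x) (hd_ui 0 0 x hx)) (ld_mul (hc 1 0 x) (hd_ui 1 0 x hx))
    convert this using 1
    simp [hS0]
  have dS1 : ∀ x ∈ U, HasLineDerivAt ℝ S (S1 x) x (eb 1) := by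
    intro x hx
    have := ld_add (ld_mul (hc 0 1 x) (hd_ui 0 1 x hx)) (ld_mul (hc 1 1 x) (hd_ui 1 1 x hx))
    convert this using 1
    simp [hS1]
  have dS00 : ∀ x ∈ U, HasLineDerivAt ℝ S0 (S00 x) x (eb 0) := by
    intro x hx
    have := ld_add (ld_add (hd_ui 0 0 x hx) (ld_mul (hc 0 0 x) (hd_uij 0 0 0 x hx)))
      (ld_mul (hc 1 0 x) (hd_uij 0 1 0 x hx))
    convert this using 1
    simp [hS00]; ring
  have dS11 : ∀ x ∈ U, HasLineDerivAt ℝ S1 (S11 x) x (eb 1) := by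
    intro x hx
    have := ld_add (ld_mul (hc 0 1 x) (hd_uij 1 0 1 x hx))
      (ld_add (hd_ui 1 1 x hx) (ld_mul (hc 1 1 x) (hd_uij 1 1 1 x hx)))
    convert this using 1
    simp [hS11]; ring
  set w : E2 → ℝ := fun x => a x * S x with hw
  have dw0 : ∀ x ∈ U, HasLineDerivAt ℝ w (pd 0 a x * S x + a x * S0 x) x (eb 0) :=
    fun x hx => ld_mul (hd_a 0 x hx) (dS0 x hx)
  have dw1 : ∀ x ∈ U, HasLineDerivAt ℝ w (pd 1 a x * S x + a x * S1 x) x (eb 1) :=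
    fun x hx => ld_mul (hd_a 1 x hx) (dS1 x hx)
  have dw00 : ∀ x ∈ U, HasLineDerivAt ℝ (fun x => pd 0 a x * S x + a x * S0 x)
      ((pd 0 (pd 0 a) x * S x + pd 0 a x * S0 x) + (pd 0 a x * S0 x + a x * S00 x)) x (eb 0) :=
    fun x hx => ld_add (ld_mul (hd_ai 0 0 x hx) (dS0 x hx)) (ld_mul (hd_a 0 x hx) (dS00 x hx))
  have dw11 : ∀ x ∈ U, HasLineDerivAt ℝ (fun x => pd 1 a x * S x + a x * S1 x)
      ((pd 1 (pd 1 a) x * S x + pd 1 a x * S1 x) + (pd 1 a x * S1 x + a x * S11 x)) x (eb 1) :=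
    fun x hx => ld_add (ld_mul (hd_ai 1 1 x hx) (dS1 x hx)) (ld_mul (hd_a 1 x hx) (dS11 x hx))
  have eqT : ∀ x ∈ U, a x * (T00 x + T11 x) + (pd 0 a x * T0 x + pd 1 a x * T1 x) = 0 := by
    intro x hx
    have f0 := hF 0 x hx
    have f1 := hF 1 x hx
    have r := hR x hx
    have r0 := hR0 x hx
    have r1 := hR1 x hx
    have hxΩ := hUΩ x hx
    simp only [hT0, hT1, hT00, hT11]
    rw [s2 x hxΩ, s3 x hxΩ, sa x hxΩ] at f1
    rw [s3' x hxΩ] at f0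
    rw [sa x hxΩ] at r1
    rw [s2 x hxΩ]
    linear_combination (x 0 - c 0) * f1 - (x 1 - c 1) * f0
      - (pd 0 (pd 0 u) x + pd 1 (pd 1 u) x) * r - pd 0 u x * r0 - pd 1 u x * r1
  have eqw : ∀ x ∈ U, a x * (((pd 0 (pd 0 a) x * S x + pd 0 a x * S0 x)
        + (pd 0 a x * S0 x + a x * S00 x))
        + ((pd 1 (pd 1 a) x * S x + pd 1 a x * S1 x) + (pd 1 a x * S1 x + a x * S11 x)))
      + ((-pd 0 a x) * (pd 0 a x * S x + a x * S0 x)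
        + (-pd 1 a x) * (pd 1 a x * S x + a x * S1 x)) = 0 := by
    intro x hx
    have f := hpde x (hUΩ x hx)
    have f0 := hF 0 x hx
    have f1 := hF 1 x hx
    have r := hR x hx
    have r0 := hR0 x hx
    have r1 := hR1 x hx
    have hxΩ := hUΩ x hx
    simp only [hS, hS0, hS1, hS00, hS11]
    rw [s2 x hxΩ, s3 x hxΩ, sa x hxΩ] at f1
    rw [s3' x hxΩ] at f0
    rw [sa x hxΩ] at r1
    rw [s2 x hxΩ]
    linear_combination a x * ((x 0 - c 0) * f0 + (x 1 - c 1) * f1)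
      + (2 * a x - ((x 0 - c 0) * pd 0 a x + (x 1 - c 1) * pd 1 a x)) * f
      + a x * (pd 0 u x * r1 - pd 1 u x * r0) + (pd 0 a x * pd 1 u x - pd 1 a x * pd 0 u x) * r
  -- continuity
  have cui : ∀ i, ContinuousOn (pd i u) K := fun i => (hui i).continuousOn.mono hKΩ
  have cx : ∀ i, ContinuousOn (fun x : E2 => x i - c i) K := fun i =>
    (by fun_prop : Continuous (fun x : E2 => x i - c i)).continuousOn
  have cT : ContinuousOn T K := ((cx 0).mul (cui 1)).sub ((cx 1).mul (cui 0))
  have cS : ContinuousOn S K := ((cx 0).mul (cui 0)).add ((cx 1).mul (cui 1))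
  have cw : ContinuousOn w K := (ha.continuousOn.mono hKΩ).mul cS
  -- boundary bounds
  have hxi : ∀ x ∈ K, ∀ i, |x i - c i| ≤ ρ1 := by
    intro x hx i
    have h1 := (hρ x hx).2
    have h2 : |x i - c i| ≤ dist x c := by
      rw [dist_eq_norm]
      simpa using PiLp.norm_apply_le (x - c) i
    linarith
  have hprod : ∀ x ∈ K \ U, ∀ i j, |(x i - c i) * pd j u x| ≤ ρ1 * B := by
    intro x hx i j
    have h1 := hxi x hx.1 i
    rw [abs_mul]
    exact mul_le_mul h1 ((pd_le j u x).trans (hB x hx)) (abs_nonneg _) ((abs_nonneg _).trans h1)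
  have bT : ∀ x ∈ K \ U, |T x| ≤ 2 * ρ1 * B := by
    intro x hx
    have h1 := abs_le.1 (hprod x hx 0 1)
    have h2 := abs_le.1 (hprod x hx 1 0)
    simp only [hT]
    rw [abs_le]; constructor <;> linarith
  have bw : ∀ x ∈ K \ U, |w x| ≤ M * (2 * ρ1 * B) := by
    intro x hx
    have h1 := abs_le.1 (hprod x hx 0 0)
    have h2 := abs_le.1 (hprod x hx 1 1)
    have h3 : |S x| ≤ 2 * ρ1 * B := by
      simp only [hS]
      rw [abs_le]; constructor <;> linarith
    have h4 := hmM x (hKΩ hx.1)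
    simp only [hw]
    rw [abs_mul, abs_of_pos (hm.trans_le h4.1)]
    exact mul_le_mul h4.2 h3 (abs_nonneg _) (by linarith)
  have hTK : ∀ x ∈ K, |T x| ≤ 2 * ρ1 * B := by
    intro x hx
    have h1 := max_principle hK hU hUK cT hapos hN' dT0 dT1 dT00 dT11 (fun x hx => (eqT x hx).ge)
      (fun x hx => (abs_le.1 (bT x hx)).2) x hx
    have h2 := max_principle hK hU hUK cT.neg hapos hN' (fun x hx => ld_neg (dT0 x hx))
      (fun x hx => ld_neg (dT1 x hx)) (fun x hx => ld_neg (dT00 x hx))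
      (fun x hx => ld_neg (dT11 x hx)) (b1 := fun x => pd 1 a x)
      (fun x hx => by have := eqT x hx; linarith)
      (fun x hx => neg_le.1 (abs_le.1 (bT x hx)).1) x hx
    exact abs_le.2 ⟨neg_le.1 h2, h1⟩
  have hN'' : ∀ x ∈ U, |-pd 0 a x| ≤ (N / m) * a x := fun x hx => by
    rw [abs_neg]; exact hN' x hx
  have hwK : ∀ x ∈ K, |w x| ≤ M * (2 * ρ1 * B) := by
    intro x hx
    have h1 := max_principle hK hU hUK cw hapos hN'' dw0 dw1 dw00 dw11
      (fun x hx => (eqw x hx).ge) (fun x hx => (abs_le.1 (bw x hx)).2) x hx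
    have h2 := max_principle hK hU hUK cw.neg hapos hN'' (fun x hx => ld_neg (dw0 x hx))
      (fun x hx => ld_neg (dw1 x hx)) (fun x hx => ld_neg (dw00 x hx))
      (fun x hx => ld_neg (dw11 x hx)) (b1 := fun x => - pd 1 a x)
      (fun x hx => by have := eqw x hx; linarith)
      (fun x hx => neg_le.1 (abs_le.1 (bw x hx)).1) x hx
    exact abs_le.2 ⟨neg_le.1 h2, h1⟩
  -- conclusion
  intro x hx
  have h1 := hTK x hx
  have h2 := hwK x hx
  have h3 := hmM x (hKΩ hx)
  have hρx := hρ x hx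
  set τ := 2 * ρ1 * B with hτ
  have hτ0 : 0 ≤ τ := (abs_nonneg _).trans h1
  have hM0 : 0 ≤ M := by linarith
  have hSx : |S x| ≤ (M / m) * τ := by
    simp only [hw] at h2
    rw [abs_mul, abs_of_pos (hm.trans_le h3.1)] at h2
    have : m * |S x| ≤ M * τ := (mul_le_mul_of_nonneg_right h3.1 (abs_nonneg _)).trans h2
    rw [div_mul_eq_mul_div, le_div_iff₀ hm]
    linarith
  have hid : dist x c ^ 2 * (pd 0 u x ^ 2 + pd 1 u x ^ 2) = T x ^ 2 + S x ^ 2 := by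
    rw [dist_sq2]; simp only [hT, hS]; ring
  have hq : 0 ≤ M / m := by positivity
  have hTS : T x ^ 2 + S x ^ 2 ≤ ((1 + M / m) * τ) ^ 2 := by
    have e1 : T x ^ 2 ≤ τ ^ 2 := sq_le_sq' (abs_le.1 h1).1 (abs_le.1 h1).2
    have e2 : S x ^ 2 ≤ ((M / m) * τ) ^ 2 := sq_le_sq' (abs_le.1 hSx).1 (abs_le.1 hSx).2
    have e3 : 0 ≤ (M / m) * τ * τ := by positivity
    nlinarith
  have hpi : ∀ i, |pd i u x| ≤ (1 + M / m) * τ / ρ0 := by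
    intro i
    rw [le_div_iff₀ hρ0]
    apply abs_le_of_sq_le_sq' _ (by positivity) |>.2
    have e1 : ρ0 ^ 2 ≤ dist x c ^ 2 := by gcongr; exact hρx.1
    have e2 : pd i u x ^ 2 ≤ pd 0 u x ^ 2 + pd 1 u x ^ 2 := by
      fin_cases i <;> simp <;> positivity
    calc (|pd i u x| * ρ0) ^ 2 = ρ0 ^ 2 * pd i u x ^ 2 := by rw [mul_pow, sq_abs]; ring
      _ ≤ dist x c ^ 2 * (pd 0 u x ^ 2 + pd 1 u x ^ 2) := by gcongr
      _ ≤ _ := by rw [hid]; exact hTS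
  calc ‖fderiv ℝ u x‖ ≤ _ := norm_le_pd u x
    _ ≤ (1 + M / m) * τ / ρ0 + (1 + M / m) * τ / ρ0 := add_le_add (hpi 0) (hpi 1)
    _ = _ := by rw [hτ]; ring

lemma half_bound {Ω : Set E2} (hΩ : IsOpen Ω) {u a : E2 → ℝ} (hu : ContDiffOn ℝ (⊤ : ℕ∞) u Ω)
    (ha : ContDiffOn ℝ (⊤ : ℕ∞) a Ω)
    (hpde : ∀ x ∈ Ω, a x * (pd 0 (pd 0 u) x + pd 1 (pd 1 u) x)
          + (pd 0 a x * pd 0 u x + pd 1 a x * pd 1 u x) = 0)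
    {m M B : ℝ} (hm : 0 < m) (hmM : ∀ x ∈ Ω, m ≤ a x ∧ a x ≤ M)
    (hu1 : ∀ x ∈ Ω, |u x| ≤ 1) {μ δ ε k : ℝ} (hμ : 0 < μ) (hμ1 : μ < 1)
    (hδμ : δ ≤ μ) (hε : 0 < ε) (hεδ : ε < δ / 2) {c c' : E2} (hcc : dist c c' = 2 + 2 * δ)
    (hin : ∀ y ∈ Ω, dist y c ≤ 1 - ε → a y = k)
    (hout : ∀ y ∈ Ω, 1 + ε ≤ dist y c → 1 + ε ≤ dist y c' → a y = 1)
    {g : ℝ → ℝ} (hg : ∀ y ∈ Ω, |dist y c - 1| < ε → a y = g (dist y c))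
    (hball : ∀ x, dist x c < 1 + 2 * μ → x ∈ Ω) (hB0 : 0 ≤ B)
    (hS : ∀ x, dist x c = dist x c' → dist x c ≤ 1 + μ → ‖fderiv ℝ u x‖ ≤ B) :
    ∀ x, (∀ y, dist y x < μ → y ∈ Ω) → dist x c ≤ dist x c' →
      ‖fderiv ℝ u x‖ ≤ (4 * (1 + μ) * (1 + M / m) / (1 - μ) + 1) * (B + 16 / μ) := by
  have harm : ∀ x, (∀ y, dist y x < μ → y ∈ Ω) → dist x c ≤ dist x c' →
      (dist x c ≤ 1 - μ ∨ 1 + μ ≤ dist x c) → ‖fderiv ℝ u x‖ ≤ 16 / μ := by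
    intro x hxΩ hxc hx
    have hsub : Metric.closedBall x (μ / 4) ⊆ Metric.ball x (μ / 2) :=
      Metric.closedBall_subset_ball (by linarith)
    have hsub2 : Metric.ball x (μ / 2) ⊆ Ω := fun y hy => hxΩ y (by
      have : dist y x < μ / 2 := hy
      linarith)
    have hconst : ∃ k' : ℝ, ∀ y ∈ Metric.ball x (μ / 2), a y = k' := by
      rcases hx with hx | hx
      · refine ⟨k, fun y hy => hin y (hsub2 hy) ?_⟩
        have h1 : dist y x < μ / 2 := hy
        have h2 := dist_triangle y x c
        linarith
      · refine ⟨1, fun y hy => hout y (hsub2 hy) ?_ ?_⟩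
        · have h1 : dist y x < μ / 2 := hy
          have h2 := dist_triangle x y c
          rw [dist_comm x y] at h2
          linarith
        · have h1 : dist y x < μ / 2 := hy
          have h2 := dist_triangle x y c'
          rw [dist_comm x y] at h2
          linarith
    obtain ⟨k', hk'⟩ := hconst
    have := harm_grad hΩ hu (c := x) (R := μ / 4) (by linarith) (hsub.trans hsub2) (by
      intro z hz
      have hzb := hsub hz
      have hzΩ := hsub2 hzb
      have e : ∀ i, pd i a z = 0 := by
        intro i
        rw [pd_congr Metric.isOpen_ball hk' hzb i]
        simp [pd]
      have h1 := hpde z hzΩ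
      rw [e 0, e 1] at h1
      simp only [zero_mul, add_zero] at h1
      have h2 : a z ≠ 0 := (hm.trans_le (hmM z hzΩ).1).ne'
      exact (mul_eq_zero.1 h1).resolve_left h2)
      (fun z hz => hu1 z (hsub2 (hsub hz)))
    have e : 4 / (μ / 4) = 16 / μ := by field_simp; norm_num
    rwa [e] at this
  set K : Set E2 := {x | 1 - μ ≤ dist x c ∧ dist x c ≤ 1 + μ ∧ dist x c ≤ dist x c'} with hKd
  set U : Set E2 := {x | 1 - μ < dist x c ∧ dist x c < 1 + μ ∧ dist x c < dist x c'} with hUd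
  have cd : ∀ b : E2, Continuous (fun x : E2 => dist x b) := fun b => by fun_prop
  have hKcl : IsClosed K := by
    exact (isClosed_le continuous_const (cd c)).inter
      ((isClosed_le (cd c) continuous_const).inter (isClosed_le (cd c) (cd c')))
  have hK : IsCompact K := by
    apply (isCompact_closedBall c (1 + μ)).of_isClosed_subset hKcl
    intro x hx
    exact hx.2.1
  have hU : IsOpen U := by
    exact (isOpen_lt continuous_const (cd c)).inter
      ((isOpen_lt (cd c) continuous_const).inter (isOpen_lt (cd c) (cd c')))
  have hKΩ : K ⊆ Ω := fun x hx => hball x (by have := hx.2.1; linarith)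
  have hUK : U ⊆ K := fun x hx => ⟨hx.1.le, hx.2.1.le, hx.2.2.le⟩
  have hμ16 : 0 < 16 / μ := by positivity
  have hKμ : ∀ x, dist x c ≤ 1 + μ → ∀ y, dist y x < μ → y ∈ Ω := by
    intro x hx y hy
    apply hball
    have := dist_triangle y x c
    linarith
  have hann := annulus hΩ hu ha hpde (ρ0 := 1 - μ) (ρ1 := 1 + μ) (B := B + 16 / μ) hm hmM hK hKΩ
    hU hUK (c := c) (by linarith) (fun x hx => ⟨hx.1, hx.2.1⟩)
    (G := fun r => if |r - 1| < ε then g r else if r < 1 then k else 1) (by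
      intro x hx
      have hxΩ := hKΩ (hUK hx)
      by_cases h1 : |dist x c - 1| < ε
      · simp only [h1, if_true]; exact hg x hxΩ h1
      · simp only [h1, if_false]
        push Not at h1
        by_cases h2 : dist x c < 1
        · simp only [h2, if_true]
          apply hin x hxΩ
          rw [abs_of_neg (by linarith)] at h1
          linarith
        · simp only [h2, if_false]
          push Not at h2
          rw [abs_of_nonneg (by linarith)] at h1
          apply hout x hxΩ (by linarith)
          have := hx.2.2
          linarith)
    (by
      rintro x ⟨hxK, hxU⟩
      by_cases h1 : dist x c = dist x c'
      · have := hS x h1 hxK.2.1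
        linarith
      · have h2 : dist x c < dist x c' := lt_of_le_of_ne hxK.2.2 h1
        have h3 : dist x c ≤ 1 - μ ∨ 1 + μ ≤ dist x c := by
          by_contra hcon
          push Not at hcon
          exact hxU ⟨hcon.1, hcon.2, h2⟩
        have := harm x (hKμ x hxK.2.1) hxK.2.2 h3
        linarith)
  intro x hxΩ hxc
  by_cases h3 : dist x c ≤ 1 - μ ∨ 1 + μ ≤ dist x c
  · have h4 := harm x hxΩ hxc h3
    have hx0 : x ∈ Ω := hxΩ x (by simpa using hμ)
    have hM : 0 ≤ M := by have := hmM x hx0; linarith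
    have : 0 ≤ 4 * (1 + μ) * (1 + M / m) / (1 - μ) := by
      have : 0 < 1 - μ := by linarith
      positivity
    nlinarith
  · push Not at h3
    have := hann x ⟨h3.1.le, h3.2.le, hxc⟩
    nlinarith

lemma inner_ball_mem {Ω : Set E2} {z : E2} {r : ℝ} (hz : z ∈ Ω)
    (hr : r ≤ Metric.infDist z (frontier Ω)) {y : E2} (hy : dist y z < r) : y ∈ Ω := by
  by_contra hn
  have hpc : IsPreconnected (Metric.ball z r) := (convex_ball z r).isPreconnected
  have hr0 : 0 < r := lt_of_le_of_lt dist_nonneg hy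
  obtain ⟨w, hw1, hw2⟩ : (Metric.ball z r ∩ frontier Ω).Nonempty := by
    by_contra hne
    have hno : ∀ w ∈ Metric.ball z r, w ∉ frontier Ω := fun w h1 h2 => hne ⟨w, h1, h2⟩
    have hzz : z ∈ Metric.ball z r := Metric.mem_ball_self hr0
    have hyy : y ∈ Metric.ball z r := hy
    have hcov : ∀ w ∈ Metric.ball z r, w ∈ interior Ω ∨ w ∈ (closure Ω)ᶜ := by
      intro w hw
      by_contra hcon
      rw [not_or, Set.mem_compl_iff, not_not] at hcon
      exact hno w hw ⟨hcon.2, hcon.1⟩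
    obtain ⟨w, _, hw1, hw2⟩ := hpc (interior Ω) (closure Ω)ᶜ isOpen_interior
      isClosed_closure.isOpen_compl hcov
      ⟨z, hzz, (hcov z hzz).resolve_right (fun h => h (subset_closure hz))⟩
      ⟨y, hyy, (hcov y hyy).resolve_left (fun h => hn (interior_subset h))⟩
    exact hw2 (subset_closure (interior_subset hw1))
  have h1 := Metric.infDist_le_dist_of_mem (x := z) hw2
  have h2 : dist w z < r := hw1
  rw [dist_comm] at h2
  linarith

lemma infDist_ge (x c : E2) : dist x c - 1 ≤ Metric.infDist x (Metric.sphere c 1) := by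
  refine (Metric.le_infDist ?_).2 ?_
  · exact NormedSpace.sphere_nonempty.2 zero_le_one
  · intro y hy
    have h1 := dist_triangle x y c
    have h2 : dist y c = 1 := hy
    linarith

lemma proj_sphere {x c : E2} (h : 1 ≤ dist x c) :
    ∃ z ∈ Metric.sphere c 1, dist x z = dist x c - 1 := by
  have h0 : 0 < dist x c := by linarith
  refine ⟨c + (dist x c)⁻¹ • (x - c), ?_, ?_⟩
  · simp only [mem_sphere_iff_norm, add_sub_cancel_left, norm_smul, norm_inv, Real.norm_eq_abs,
      abs_of_pos h0]
    rw [← dist_eq_norm]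
    field_simp
  · rw [dist_eq_norm]
    have : x - (c + (dist x c)⁻¹ • (x - c)) = (1 - (dist x c)⁻¹) • (x - c) := by module
    rw [this, norm_smul, Real.norm_eq_abs, ← dist_eq_norm x c, abs_of_nonneg]
    · field_simp
    · have := inv_le_one_of_one_le₀ h
      linarith

lemma ball_mem {Ω : Set E2} {c : E2} {μ : ℝ} (hμ : 0 < μ)
    (h : closure (Metric.ball c 1) ⊆ innerReg Ω (2 * μ)) {x : E2} (hx : dist x c < 1 + 2 * μ) :
    x ∈ Ω := by
  rw [closure_ball c one_ne_zero] at h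
  by_cases h1 : dist x c ≤ 1
  · exact (h h1).1
  · push Not at h1
    obtain ⟨z, hz, hxz⟩ := proj_sphere h1.le
    have hz' := h (Metric.sphere_subset_closedBall hz)
    exact inner_ball_mem hz'.1 hz'.2 (by linarith)

lemma ctr_zero (δ : ℝ) : ctr δ 0 = 0 := rfl
lemma ctr_one (δ : ℝ) : ctr δ 1 = -2 - 2 * δ := rfl

lemma dist_ctr {δ : ℝ} (hδ : 0 < δ) : dist (0 : E2) (ctr δ) = 2 + 2 * δ := by
  have h := dist_sq2 0 (ctr δ)
  rw [ctr_zero, ctr_one] at h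
  have : dist (0 : E2) (ctr δ) ^ 2 = (2 + 2 * δ) ^ 2 := by
    rw [h]; simp; ring
  exact (pow_left_inj₀ dist_nonneg (by linarith) two_ne_zero).1 this

lemma bisector {δ : ℝ} (hδ : 0 < δ) {x : E2} :
    dist x 0 = dist x (ctr δ) ↔ x 1 = -1 - δ := by
  have h0 := dist_sq2 x 0
  have h1 := dist_sq2 x (ctr δ)
  rw [ctr_zero, ctr_one] at h1
  simp only [PiLp.zero_apply, sub_zero] at h0 h1
  constructor
  · intro h
    rw [h] at h0
    have : (2 + 2 * δ) * (2 * x 1 + 2 + 2 * δ) = 0 := by linarith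
    rcases mul_eq_zero.1 this with h | h <;> linarith
  · intro h
    have : dist x 0 ^ 2 = dist x (ctr δ) ^ 2 := by rw [h0, h1, h]; ring
    exact (pow_left_inj₀ dist_nonneg dist_nonneg two_ne_zero).1 this

/-- Lemma 4.1: if `‖φ‖_{L^∞(∂Ω)} ≤ 1`, there is a constant `C` depending only on
`Ω, μ, δ₀, κ⁺, κ⁻` such that `sup_{Ω^μ} |∇u_ε| ≤ C (sup_S |∇u_ε| + 1)`. -/
theorem stmt7 (Ω : Set (EuclideanSpace ℝ (Fin 2)))
    (hΩo : IsOpen Ω) (hΩb : Bornology.IsBounded Ω) (hΩs : SmoothBoundary Ω)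
    (μ δ₀ κp κm : ℝ) (hμ : μ ∈ Ioo (0:ℝ) 1) (hδ₀ : 0 < δ₀)
    (hκp : 0 < κp) (hκm : 0 < κm) :
    ∃ C > 0, ∀ δ ∈ Ioo 0 δ₀, ∀ ε ∈ Ioo 0 (δ / 2),
      closure Bp ∪ closure (Bm δ) ⊆ innerReg Ω (2 * μ) →
      -- `c₁` is the largest constant with `S ⊆ W⁺ ∪ W⁻`
      ∀ c₁ : ℝ, 0 < c₁ → Sseg c₁ δ ⊆ Wp Ω δ μ ∪ Wm Ω δ μ →
        (∀ c : ℝ, Sseg c δ ⊆ Wp Ω δ μ ∪ Wm Ω δ μ → c ≤ c₁) →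
      ∀ φ : EuclideanSpace ℝ (Fin 2) → ℝ, ContDiff ℝ (⊤ : ℕ∞) φ →
        (∀ y ∈ frontier Ω, |φ y| ≤ 1) →
      ∀ aε : EuclideanSpace ℝ (Fin 2) → ℝ,
        ContDiffOn ℝ (⊤ : ℕ∞) aε Ω →
        (∀ x ∈ Ω, min 1 (min κp κm) ≤ aε x ∧ aε x ≤ max 1 (max κp κm)) →
        -- `aε = a` outside the `ε`-neighborhoods of `∂B⁺` and `∂B⁻`
        (∀ x ∈ Ω, ε ≤ |‖x‖ - 1| → ε ≤ |dist x (ctr δ) - 1| → aε x = aFun δ κp κm x) →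
        -- near `∂B⁺`, `aε` is radial, nonincreasing if `κ⁺ > 1`, nondecreasing if `κ⁺ < 1`
        (∃ g : ℝ → ℝ, (1 < κp → Antitone g) ∧ (κp < 1 → Monotone g) ∧
          ∀ x ∈ Ω, |‖x‖ - 1| < ε → aε x = g ‖x‖) →
        -- similarly near `∂B⁻`
        (∃ g : ℝ → ℝ, (1 < κm → Antitone g) ∧ (κm < 1 → Monotone g) ∧
          ∀ x ∈ Ω, |dist x (ctr δ) - 1| < ε → aε x = g (dist x (ctr δ))) →
      ∀ uε : EuclideanSpace ℝ (Fin 2) → ℝ,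
        ContDiffOn ℝ (⊤ : ℕ∞) uε Ω →
        ContinuousOn uε (closure Ω) →
        EqOn uε φ (frontier Ω) →
        (∀ x ∈ Ω, aε x * (pd 0 (pd 0 uε) x + pd 1 (pd 1 uε) x)
          + (pd 0 aε x * pd 0 uε x + pd 1 aε x * pd 1 uε x) = 0) →
        ∀ x ∈ innerReg Ω μ,
          ‖fderiv ℝ uε x‖
            ≤ C * (sSup ((fun y => ‖fderiv ℝ uε y‖) '' Sseg c₁ δ) + 1) := by
  obtain ⟨hμ0, hμ1⟩ := hμ
  set m : ℝ := min 1 (min κp κm) with hm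
  set M : ℝ := max 1 (max κp κm) with hM
  have hm0 : 0 < m := lt_min one_pos (lt_min hκp hκm)
  have hM0 : 0 < M := lt_max_of_lt_left one_pos
  set C0 : ℝ := 4 * (1 + μ) * (1 + M / m) / (1 - μ) + 1 with hC0
  have hC0p : 0 < C0 := by
    have : 0 < 1 - μ := by linarith
    positivity
  refine ⟨C0 * (1 + 16 / μ), by positivity, ?_⟩
  intro δ hδ ε hε hsub c₁ hc₁ hS hmax φ hφ hφ1 a ha hab haF hgp hgm u hu huc huφ hpde x hx
  obtain ⟨hδ0, -⟩ := hδ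
  obtain ⟨hε0, hεδ⟩ := hε
  obtain ⟨gp, -, -, hgp⟩ := hgp
  obtain ⟨gm, -, -, hgm⟩ := hgm
  have hcc := dist_ctr hδ0
  have hcc' : dist (ctr δ) 0 = 2 + 2 * δ := by rw [dist_comm]; exact hcc
  have hb0 : ∀ x, dist x 0 < 1 + 2 * μ → x ∈ Ω := fun x hx =>
    ball_mem hμ0 (subset_union_left.trans hsub) hx
  have hb1 : ∀ x, dist x (ctr δ) < 1 + 2 * μ → x ∈ Ω := fun x hx =>
    ball_mem hμ0 (subset_union_right.trans hsub) hx
  have hSΩ : Sseg c₁ δ ⊆ Ω := fun y hy => (hS hy).elim (fun h => h.1) (fun h => h.1)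
  -- δ ≤ μ
  have hδμ : δ ≤ μ := by
    set y : E2 := EuclideanSpace.single 1 (-1 - δ) with hy
    have hy0 : y 0 = 0 := by simp [hy]
    have hy1 : y 1 = -1 - δ := by simp [hy]
    have hyS : y ∈ Sseg c₁ δ := by
      refine ⟨?_, hy1⟩
      rw [hy0]; simpa using hc₁.le
    have hd : dist y 0 = 1 + δ := by
      have h := dist_sq2 y 0
      rw [hy0, hy1] at h
      have : dist y 0 ^ 2 = (1 + δ) ^ 2 := by rw [h]; simp; ring
      exact (pow_left_inj₀ dist_nonneg (by linarith) two_ne_zero).1 this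
    have hd' : dist y (ctr δ) = 1 + δ := by rw [← (bisector hδ0).2 hy1, hd]
    rcases hS hyS with h | h
    · have h1 := infDist_ge y 0
      have h2 := h.2.1
      linarith
    · have h1 := infDist_ge y (ctr δ)
      have h2 := h.2.1
      linarith
  -- values of the coefficient
  have hin0 : ∀ y ∈ Ω, dist y 0 ≤ 1 - ε → a y = κp := by
    intro y hy hd
    have h1 := dist_triangle_left (0 : E2) (ctr δ) y
    rw [haF y hy]
    · have : y ∈ Bp := by
        show dist y 0 < 1
        linarith
      simp [aFun, this]
    · rw [dist_zero_right] at hd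
      rw [abs_of_nonpos (by linarith)]; linarith
    · rw [abs_of_nonneg (by linarith)]; linarith
  have hin1 : ∀ y ∈ Ω, dist y (ctr δ) ≤ 1 - ε → a y = κm := by
    intro y hy hd
    have h1 := dist_triangle_left (0 : E2) (ctr δ) y
    rw [haF y hy]
    · have h2 : y ∈ Bm δ := by
        show dist y (ctr δ) < 1
        linarith
      have h3 : y ∉ Bp := by
        show ¬ (dist y 0 < 1)
        linarith
      simp [aFun, h2, h3]
    · rw [← dist_zero_right, abs_of_nonneg (by linarith)]; linarith
    · rw [abs_of_nonpos (by linarith)]; linarith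
  have hout : ∀ y ∈ Ω, 1 + ε ≤ dist y 0 → 1 + ε ≤ dist y (ctr δ) → a y = 1 := by
    intro y hy h1 h2
    rw [haF y hy]
    · have h3 : y ∉ Bm δ := by
        show ¬ (dist y (ctr δ) < 1)
        linarith
      have h4 : y ∉ Bp := by
        show ¬ (dist y 0 < 1)
        linarith
      simp [aFun, h3, h4]
    · rw [← dist_zero_right, abs_of_nonneg (by linarith)]; linarith
    · rw [abs_of_nonneg (by linarith)]; linarith
  -- bound for u
  have hu1 : ∀ y ∈ Ω, |u y| ≤ 1 := by
    have hK : IsCompact (closure Ω) := hΩb.isCompact_closure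
    set N : Set E2 := Metric.closedBall 0 (1 + μ) ∪ Metric.closedBall (ctr δ) (1 + μ) with hN
    have hNc : IsCompact N := (isCompact_closedBall _ _).union (isCompact_closedBall _ _)
    have hNΩ : N ⊆ Ω := by
      rintro y (hy | hy)
      · have : dist y 0 ≤ 1 + μ := hy
        exact hb0 y (by linarith)
      · have : dist y (ctr δ) ≤ 1 + μ := hy
        exact hb1 y (by linarith)
    obtain ⟨L, hL⟩ := (hNc.image_of_continuousOn
      (((pd_smooth hΩo ha 0).continuousOn.mono hNΩ).abs)).bddAbove
    have hL0 : 0 ≤ L := by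
      have h0 : (0 : E2) ∈ N := Or.inl (Metric.mem_closedBall_self (by linarith))
      exact (abs_nonneg _).trans (hL (mem_image_of_mem _ h0))
    have hdrift : ∀ y ∈ Ω, |pd 0 a y| ≤ (L / m) * a y := by
      intro y hy
      have hay := (hab y hy).1
      have h2 : |pd 0 a y| ≤ L := by
        by_cases hyN : y ∈ N
        · exact hL (mem_image_of_mem _ hyN)
        · have : pd 0 a y = pd 0 (fun _ => (1:ℝ)) y := by
            apply pd_congr (hΩo.inter hNc.isClosed.isOpen_compl) _ ⟨hy, hyN⟩
            rintro z ⟨hz, hzN⟩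
            have hz0 : ¬ (dist z 0 ≤ 1 + μ) := fun h => hzN (Or.inl h)
            have hz1 : ¬ (dist z (ctr δ) ≤ 1 + μ) := fun h => hzN (Or.inr h)
            exact hout z hz (by linarith) (by linarith)
          rw [this]
          simpa [pd] using hL0
      calc _ ≤ L := h2
        _ = (L / m) * m := by field_simp
        _ ≤ _ := by gcongr
    have hapos : ∀ y ∈ Ω, 0 < a y := fun y hy => hm0.trans_le (hab y hy).1
    have d := fun k y (hy : y ∈ Ω) => ld_pd hΩo hu k hy
    have dd := fun k y (hy : y ∈ Ω) => ld_pd hΩo (pd_smooth hΩo hu k) k hy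
    have hbd : ∀ y ∈ closure Ω \ Ω, |u y| ≤ 1 := by
      intro y hy
      have hyf : y ∈ frontier Ω := by rw [hΩo.frontier_eq]; exact hy
      rw [huφ hyf]; exact hφ1 y hyf
    intro y hy
    have h1 := max_principle hK hΩo subset_closure huc hapos hdrift (d 0) (d 1) (dd 0) (dd 1)
      (fun z hz => (hpde z hz).ge) (fun z hz => (abs_le.1 (hbd z hz)).2) y (subset_closure hy)
    have h2 := max_principle hK hΩo subset_closure huc.neg hapos hdrift
      (fun z hz => ld_neg (d 0 z hz)) (fun z hz => ld_neg (d 1 z hz))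
      (fun z hz => ld_neg (dd 0 z hz)) (fun z hz => ld_neg (dd 1 z hz)) (b1 := fun z => pd 1 a z)
      (fun z hz => by have := hpde z hz; linarith)
      (fun z hz => neg_le.1 (abs_le.1 (hbd z hz)).1) y (subset_closure hy)
    exact abs_le.2 ⟨neg_le.1 h2, h1⟩
  -- the supremum over S
  set B : ℝ := sSup ((fun y => ‖fderiv ℝ u y‖) '' Sseg c₁ δ) with hB
  have hB0 : 0 ≤ B := Real.sSup_nonneg (by rintro _ ⟨y, -, rfl⟩; exact norm_nonneg _)
  have hScl : IsClosed (Sseg c₁ δ) := by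
    have c0 : Continuous (fun x : E2 => |x 0|) := by fun_prop
    have c1 : Continuous (fun x : E2 => x 1) := by fun_prop
    exact (isClosed_le c0 continuous_const).inter (isClosed_eq c1 continuous_const)
  have hSc : IsCompact (Sseg c₁ δ) := Metric.isCompact_of_isClosed_isBounded hScl (hΩb.subset hSΩ)
  have hfc : ContinuousOn (fun y => ‖fderiv ℝ u y‖) (Sseg c₁ δ) :=
    ((hu.continuousOn_fderiv_of_isOpen hΩo (by simp)).mono hSΩ).norm
  have hbdd := (hSc.image_of_continuousOn hfc).bddAbove
  have hSB : ∀ y, dist y 0 = dist y (ctr δ) → dist y 0 ≤ 1 + μ → ‖fderiv ℝ u y‖ ≤ B := by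
    intro y hy hyμ
    have hy1 := (bisector hδ0).1 hy
    apply le_csSup hbdd
    refine mem_image_of_mem _ ⟨hmax _ ?_, hy1⟩
    rintro z ⟨hz0, hz1⟩
    left
    have e1 := dist_sq2 z 0
    have e2 := dist_sq2 y 0
    simp only [PiLp.zero_apply, sub_zero] at e1 e2
    rw [hz1] at e1
    rw [hy1] at e2
    have e3 : z 0 ^ 2 ≤ y 0 ^ 2 := sq_le_sq.2 hz0
    have hzμ : dist z 0 ≤ 1 + μ := by
      refine le_trans ?_ hyμ
      exact (abs_le_of_sq_le_sq' (by linarith) dist_nonneg).2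
    have hz1' : 1 ≤ dist z 0 := by
      have : (1:ℝ) ^ 2 ≤ dist z 0 ^ 2 := by rw [e1]; nlinarith [sq_nonneg (z 0)]
      exact (abs_le_of_sq_le_sq' this dist_nonneg).2
    refine ⟨hb0 z (by linarith), ?_, hz1.ge⟩
    obtain ⟨p, hp, hzp⟩ := proj_sphere hz1'
    have := Metric.infDist_le_dist_of_mem (x := z) hp
    linarith
  have hxμ : ∀ y, dist y x < μ → y ∈ Ω := fun y hy => inner_ball_mem hx.1 hx.2 hy
  have key : ‖fderiv ℝ u x‖ ≤ C0 * (B + 16 / μ) := by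
    rcases le_total (dist x 0) (dist x (ctr δ)) with h | h
    · exact half_bound hΩo hu ha hpde hm0 hab hu1 hμ0 hμ1 hδμ hε0 hεδ hcc hin0 hout
        (g := gp) (by
          intro y hy hd
          rw [dist_zero_right] at hd ⊢
          exact hgp y hy hd) hb0 hB0 hSB x hxμ h
    · exact half_bound hΩo hu ha hpde hm0 hab hu1 hμ0 hμ1 hδμ hε0 hεδ hcc' hin1
        (fun y hy h1 h2 => hout y hy h2 h1) (g := gm) hgm hb1 hB0
        (fun y h1 h2 => hSB y h1.symm (h1 ▸ h2)) x hxμ h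
  refine key.trans ?_
  rw [mul_assoc]
  apply mul_le_mul_of_nonneg_left _ hC0p.le
  have : 0 ≤ B * (16 / μ) := by positivity
  linarith
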